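/- Let 1 < p < ∞, p ≠ 2, and -1 < α < ∞. Suppose φ_1 and φ_2 are bounded linear functionals on A^p_α with ‖φ_1‖ = ‖φ_2‖ = 1 and ‖φ_1 - φ_2‖ < δ for some δ > 0, and let F_1 and F_2 be the extremal functions of φ_1 and φ_2 respectively. Then: if 2 < p < ∞, ‖F_1 - F_2‖_{p,α} ≤ 2^{1-1/p} p^{1/p} δ^{1/p}; and if 1 < p < 2, ‖F_1 - F_2‖_{p,α} ≤ 2 (p-1)^{-1/2} δ^{1/2}. -/

import Mathlib

/-!
The extremal functions `F₁, F₂` have unit norm and satisfy `Re φ₂((F₁ + F₂) / 2) ≥ 1 - δ / 2`,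
so their midpoint has norm at least `1 - δ / 2`, and by Bernoulli's inequality the `p`-th power
of that norm is at least `1 - p δ / 2` (`one_sub_le_bInt_midpoint`). Uniform convexity of `L^p`
then forces `F₁` and `F₂` to be close.

For `p > 2` the uniform convexity is Clarkson's inequality, integrated from its pointwise form
`clarkson_pointwise`. For `1 < p < 2` it is
`‖(f + g) / 2‖ ^ p + p (p - 1) / 8 * ‖f - g‖ ^ 2 ≤ 1` for unit vectors `f, g`.
Its pointwise source is
`|(a + b) / 2| ^ p + p (p - 1) / 8 * |a - b| ^ 2 * s ^ (p - 2) ≤ (|a| ^ p + |b| ^ p) / 2`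
with `s = (|a| + |b|) / 2`, which reduces to the one-variable bound
`1 + p (p - 1) / 2 * d ^ 2 ≤ ((1 + d) ^ p + (1 - d) ^ p) / 2`. Hölder's inequality would turn
`∫ |f - g| ^ 2 s ^ (p - 2)` into `‖f - g‖ ^ 2`; here the Hölder step is replaced by a tangent
line inequality with `N = ‖f - g‖` as a parameter, so that only the integrals of `|f| ^ p`,
`|g| ^ p`, `|f + g| ^ p` and `|f - g| ^ p` appear (`convexity_pointwise`).
-/

open MeasureTheory Complex Set Metric

noncomputable section

/-- The open unit disc in `ℂ`. -/
def unitDisc : Set ℂ := Metric.ball 0 1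

/-- The density of the weighted measure `dA_α = (α+1) π⁻¹ (1-|z|²)^α dA`
with respect to area measure. -/
def wt (α : ℝ) (z : ℂ) : ℝ := (α + 1) / Real.pi * (1 - ‖z‖ ^ 2) ^ α

/-- The norm `‖f‖_{p,α}` of the weighted Bergman space `A^p_α`. -/
def bNorm (p α : ℝ) (f : ℂ → ℂ) : ℝ :=
  (∫ z in unitDisc, ‖f z‖ ^ p * wt α z) ^ (1 / p)

/-- Membership in the weighted Bergman space `A^p_α`: analytic on the unit disc
with finite weighted `p`-norm. -/
def MemAp (p α : ℝ) (f : ℂ → ℂ) : Prop :=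
  DifferentiableOn ℂ f unitDisc ∧
    IntegrableOn (fun z => ‖f z‖ ^ p * wt α z) unitDisc

/-- The norm of a linear functional restricted to the unit ball of `A^p_α`. -/
def dualNorm (p α : ℝ) (φ : (ℂ → ℂ) →ₗ[ℂ] ℂ) : ℝ :=
  sSup {r | ∃ f, MemAp p α f ∧ bNorm p α f ≤ 1 ∧ r = (φ f).re}

/-- `F` is the extremal function for the functional `φ`: it lies in `A^p_α`,
has unit norm, and `Re φ(F) = ‖φ‖`. -/
def IsExtremalFn (p α : ℝ) (φ : (ℂ → ℂ) →ₗ[ℂ] ℂ) (F : ℂ → ℂ) : Prop :=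
  MemAp p α F ∧ bNorm p α F = 1 ∧ (φ F).re = dualNorm p α φ

/-- `Q` is the degree-`n` extremal polynomial for the functional `φ`. -/
def IsExtremalPoly (p α : ℝ) (φ : (ℂ → ℂ) →ₗ[ℂ] ℂ) (n : ℕ) (Q : Polynomial ℂ) : Prop :=
  Q.natDegree ≤ n ∧ bNorm p α (fun z => Q.eval z) = 1 ∧
    ∀ P : Polynomial ℂ, P.natDegree ≤ n → bNorm p α (fun z => P.eval z) ≤ 1 →
      (φ fun z => P.eval z).re ≤ (φ fun z => Q.eval z).re

/-! ### Pointwise inequalities -/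

/-- Clarkson's inequality for complex numbers. -/
lemma clarkson_pointwise {p : ℝ} (hp : 2 < p) (a b : ℂ) :
    ‖(1 / 2 : ℂ) * (a + b)‖ ^ p + ‖a - b‖ ^ p / 2 ^ p ≤ (‖a‖ ^ p + ‖b‖ ^ p) / 2 := by
  have hm : ‖(1 / 2 : ℂ) * (a + b)‖ = ‖a + b‖ / 2 := by
    rw [norm_mul]; norm_num; ring
  have key : ∀ x : ℝ, 0 ≤ x → x ^ p = (x ^ 2) ^ (p / 2) := fun x hx => by
    rw [← Real.rpow_natCast x 2, ← Real.rpow_mul hx]; congr 1; push_cast; ring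
  have hpar : (‖a + b‖ / 2) ^ 2 + (‖a - b‖ / 2) ^ 2
      = 1 / 2 * ‖a‖ ^ 2 + 1 / 2 * ‖b‖ ^ 2 := by
    have := parallelogram_law_with_norm ℝ a b
    nlinarith
  rw [hm, ← Real.div_rpow (norm_nonneg _) (by norm_num)]
  calc (‖a + b‖ / 2) ^ p + (‖a - b‖ / 2) ^ p
      = ((‖a + b‖ / 2) ^ 2) ^ (p / 2) + ((‖a - b‖ / 2) ^ 2) ^ (p / 2) := by
        rw [key _ (by positivity), key (‖a - b‖ / 2) (by positivity)]
    _ ≤ ((‖a + b‖ / 2) ^ 2 + (‖a - b‖ / 2) ^ 2) ^ (p / 2) :=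
        mod_cast NNReal.add_rpow_le_rpow_add ⟨(‖a + b‖ / 2) ^ 2, by positivity⟩
          ⟨(‖a - b‖ / 2) ^ 2, by positivity⟩ (p := p / 2) (by linarith)
    _ = (1 / 2 * ‖a‖ ^ 2 + 1 / 2 * ‖b‖ ^ 2) ^ (p / 2) := by rw [hpar]
    _ ≤ 1 / 2 * (‖a‖ ^ 2) ^ (p / 2) + 1 / 2 * (‖b‖ ^ 2) ^ (p / 2) :=
        (convexOn_rpow (p := p / 2) (by linarith)).2 (mem_Ici.2 (by positivity))
          (mem_Ici.2 (by positivity)) (by norm_num) (by norm_num) (by norm_num)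
    _ = (‖a‖ ^ p + ‖b‖ ^ p) / 2 := by
        rw [key _ (norm_nonneg a), key _ (norm_nonneg b)]; ring

/-- The derivative of the gap in `one_add_sq_le_rpow_mean` is nonnegative. -/
lemma two_mul_le_rpow_sub_rpow {q : ℝ} (hq0 : 0 < q) (hq1 : q < 1) {d : ℝ} (hd0 : 0 ≤ d)
    (hd1 : d ≤ 1) : 2 * q * d ≤ (1 + d) ^ q - (1 - d) ^ q := by
  let h : ℝ → ℝ := fun x => (1 + x) ^ q - (1 - x) ^ q - 2 * q * x
  have hder : ∀ x ∈ Ioo (0 : ℝ) 1, HasDerivAt h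
      (q * (1 + x) ^ (q - 1) + q * (1 - x) ^ (q - 1) - 2 * q) x := by
    intro x hx
    have e1 := ((hasDerivAt_id x).const_add 1).rpow_const (p := q)
      (Or.inl (by simp only [id]; linarith [hx.1]))
    have e2 := ((hasDerivAt_id x).const_sub 1).rpow_const (p := q)
      (Or.inl (by simp only [id]; linarith [hx.2]))
    have e3 := (hasDerivAt_id x).const_mul (2 * q)
    refine ((e1.sub e2).sub e3).congr_deriv ?_
    simp only [id]; ring
  have hmono : MonotoneOn h (Icc 0 1) := by
    apply monotoneOn_of_deriv_nonneg (convex_Icc 0 1)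
    · apply ContinuousOn.sub (ContinuousOn.sub ?_ ?_) (by fun_prop)
      · exact ContinuousOn.rpow_const (by fun_prop) (fun x _ => Or.inr hq0.le)
      · exact ContinuousOn.rpow_const (by fun_prop) (fun x _ => Or.inr hq0.le)
    · rw [interior_Icc]
      exact fun x hx => (hder x hx).differentiableAt.differentiableWithinAt
    · rw [interior_Icc]
      intro x hx
      rw [(hder x hx).deriv]
      -- AM-GM: the two powers have product `(1 - x²)^(q-1) ≥ 1`.
      have hu : 0 < (1 + x) ^ (q - 1) := Real.rpow_pos_of_pos (by linarith [hx.1]) _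
      have hv : 0 < (1 - x) ^ (q - 1) := Real.rpow_pos_of_pos (by linarith [hx.2]) _
      have huv : 1 ≤ (1 + x) ^ (q - 1) * (1 - x) ^ (q - 1) := by
        rw [← Real.mul_rpow (by linarith [hx.1]) (by linarith [hx.2])]
        exact Real.one_le_rpow_of_pos_of_le_one_of_nonpos
          (mul_pos (by linarith [hx.1]) (by linarith [hx.2]))
          (by nlinarith [hx.1, hx.2]) (by linarith)
      have h2 : 2 ≤ (1 + x) ^ (q - 1) + (1 - x) ^ (q - 1) := by
        nlinarith [sq_nonneg ((1 + x) ^ (q - 1) - (1 - x) ^ (q - 1))]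
      nlinarith
  have := hmono (left_mem_Icc.2 zero_le_one) ⟨hd0, hd1⟩ hd0
  simp only [h] at this
  simp at this
  linarith

/-- The right side dominates the first two terms of its even Taylor expansion, all of whose
coefficients are nonnegative for `1 < p < 2`. -/
lemma one_add_sq_le_rpow_mean {p : ℝ} (hp1 : 1 < p) (hp2 : p < 2) {d : ℝ} (hd0 : 0 ≤ d)
    (hd1 : d ≤ 1) : 1 + p * (p - 1) / 2 * d ^ 2 ≤ ((1 + d) ^ p + (1 - d) ^ p) / 2 := by
  let h : ℝ → ℝ := fun x => (1 + x) ^ p + (1 - x) ^ p - p * (p - 1) * x ^ 2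
  have hder : ∀ x ∈ Ioo (0 : ℝ) 1, HasDerivAt h
      (p * (1 + x) ^ (p - 1) - p * (1 - x) ^ (p - 1) - p * (p - 1) * (2 * x)) x := by
    intro x hx
    have e1 := ((hasDerivAt_id x).const_add 1).rpow_const (p := p) (Or.inr hp1.le)
    have e2 := ((hasDerivAt_id x).const_sub 1).rpow_const (p := p) (Or.inr hp1.le)
    have e3 := (hasDerivAt_pow 2 x).const_mul (p * (p - 1))
    refine ((e1.add e2).sub e3).congr_deriv ?_
    simp only [id]; push_cast; ring
  have hmono : MonotoneOn h (Icc 0 1) := by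
    apply monotoneOn_of_deriv_nonneg (convex_Icc 0 1)
    · apply ContinuousOn.sub (ContinuousOn.add ?_ ?_) (by fun_prop)
      · exact ContinuousOn.rpow_const (by fun_prop) (fun x _ => Or.inr (by linarith))
      · exact ContinuousOn.rpow_const (by fun_prop) (fun x _ => Or.inr (by linarith))
    · rw [interior_Icc]
      exact fun x hx => (hder x hx).differentiableAt.differentiableWithinAt
    · rw [interior_Icc]
      intro x hx
      rw [(hder x hx).deriv]
      have := two_mul_le_rpow_sub_rpow (q := p - 1) (by linarith) (by linarith) hx.1.le hx.2.le
      nlinarith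
  have := hmono (left_mem_Icc.2 zero_le_one) ⟨hd0, hd1⟩ hd0
  simp only [h] at this
  simp at this
  linarith

/-- The case `s = (|a| + |b|) / 2 = 1` of `convexity_pointwise`, in terms of `m = |a + b| / 2`,
`w = |a - b| / 2` and `d = ||a| - |b|| / 2`; the hypothesis `hpar` is the parallelogram law. -/
lemma convexity_normalized {p : ℝ} (hp1 : 1 < p) (hp2 : p < 2) {N m w d : ℝ} (hN : 0 < N)
    (hm0 : 0 ≤ m) (hm1 : m ≤ 1) (hw : 0 ≤ w) (hd0 : 0 ≤ d) (hd1 : d ≤ 1)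
    (hpar : m ^ 2 + w ^ 2 = 1 + d ^ 2) :
    m ^ p + p * (p - 1) / 8 * N ^ 2 * (2 / p * (2 * w / N) ^ p
        - (2 / p - 1) * (((1 + d) ^ p + (1 - d) ^ p) / 2))
      ≤ ((1 + d) ^ p + (1 - d) ^ p) / 2 := by
  have hA := one_add_sq_le_rpow_mean hp1 hp2 hd0 hd1
  set A := ((1 + d) ^ p + (1 - d) ^ p) / 2
  have hpp : 0 < p * (p - 1) := mul_pos (by linarith) (by linarith)
  have hA1 : 1 ≤ A := by nlinarith [mul_nonneg hpp.le (sq_nonneg d)]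
  have hmp : m ^ p ≤ 1 + p / 2 * (m ^ 2 - 1) := by
    have h := rpow_one_add_le_one_add_mul_self (s := m ^ 2 - 1) (by nlinarith [sq_nonneg m])
      (p := p / 2) (by linarith) (by linarith)
    have e : (1 + (m ^ 2 - 1)) ^ (p / 2) = m ^ p := by
      rw [add_sub_cancel, ← Real.rpow_natCast m 2, ← Real.rpow_mul hm0]
      congr 1; push_cast; ring
    rwa [e] at h
  -- The tangent line at `1` of the convex function `t ↦ t ^ (2 / p)`, at `t = (2 w / N) ^ p`.
  have hx : 2 / p * (2 * w / N) ^ p - (2 / p - 1) ≤ (2 * w / N) ^ 2 := by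
    have hx0 : 0 ≤ 2 * w / N := by positivity
    set x := 2 * w / N
    have h := one_add_mul_self_le_rpow_one_add (s := x ^ p - 1)
      (by linarith [Real.rpow_nonneg hx0 p]) (p := 2 / p) (by rw [le_div_iff₀] <;> linarith)
    have e : (1 + (x ^ p - 1)) ^ (2 / p) = x ^ 2 := by
      rw [add_sub_cancel, ← Real.rpow_mul hx0, ← Real.rpow_natCast x 2]
      congr 1; push_cast; field_simp
    rw [e] at h
    linarith
  have h2p : 0 ≤ 2 / p - 1 := by
    rw [sub_nonneg, le_div_iff₀] <;> linarith
  have hx' : 2 / p * (2 * w / N) ^ p - (2 / p - 1) * A ≤ (2 * w / N) ^ 2 := by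
    nlinarith [mul_nonneg h2p (sub_nonneg.2 hA1)]
  have hmul := mul_le_mul_of_nonneg_left hx'
    (show 0 ≤ p * (p - 1) / 8 * N ^ 2 by positivity)
  have e : p * (p - 1) / 8 * N ^ 2 * (2 * w / N) ^ 2 = p * (p - 1) / 2 * w ^ 2 := by
    field_simp; ring
  rw [e] at hmul
  -- `w² = (1 - m²) + d²`, and `p (p - 1) / 2 ≤ p / 2`.
  have hm2 : 0 ≤ 1 - m ^ 2 := by nlinarith
  have hw2 : w ^ 2 = 1 - m ^ 2 + d ^ 2 := by linarith
  rw [hw2] at hmul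
  nlinarith [mul_nonneg (mul_nonneg (show 0 ≤ p by linarith) (show 0 ≤ 2 - p by linarith)) hm2]

/-- A pointwise form of the 2-uniform convexity of `L^p` for `1 < p < 2`. The parameter `N` is
meant to be the `L^p` norm of the difference; the term multiplied by `p (p - 1) / 8` is a lower
bound for `|a - b|² s ^ (p - 2)` with `s = (|a| + |b|) / 2`. -/
lemma convexity_pointwise {p : ℝ} (hp1 : 1 < p) (hp2 : p < 2) {N : ℝ} (hN : 0 < N) (a b : ℂ) :
    ‖(1 / 2 : ℂ) * (a + b)‖ ^ p + p * (p - 1) / 8 * N ^ 2 * (2 / p * (‖a - b‖ ^ p / N ^ p)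
        - (2 / p - 1) * ((‖a‖ ^ p + ‖b‖ ^ p) / 2))
      ≤ (‖a‖ ^ p + ‖b‖ ^ p) / 2 := by
  wlog hab : ‖b‖ ≤ ‖a‖ generalizing a b
  · have := this b a (le_of_not_ge hab)
    rwa [add_comm b a, norm_sub_rev b a, add_comm (‖b‖ ^ p)] at this
  have hm : ‖(1 / 2 : ℂ) * (a + b)‖ = ‖a + b‖ / 2 := by
    rw [norm_mul]; norm_num; ring
  rw [hm]
  rcases (norm_nonneg a).eq_or_lt with ha | ha
  · have hb : ‖b‖ = 0 := le_antisymm (ha ▸ hab) (norm_nonneg b)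
    have ha' : a = 0 := norm_eq_zero.1 ha.symm
    have hb' : b = 0 := norm_eq_zero.1 hb
    have : p ≠ 0 := by linarith
    simp [ha', hb', Real.zero_rpow this]
  have hb := norm_nonneg b
  obtain ⟨s, hs⟩ : ∃ s, s = (‖a‖ + ‖b‖) / 2 := ⟨_, rfl⟩
  have hs0 : 0 < s := by rw [hs]; linarith
  have hpar := parallelogram_law_with_norm ℝ a b
  have key := convexity_normalized hp1 hp2 hN (m := ‖a + b‖ / 2 / s) (w := ‖a - b‖ / 2 / s)
    (d := (‖a‖ - ‖b‖) / 2 / s) (by positivity)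
    (by rw [div_le_one hs0]; linarith [norm_add_le a b]) (by positivity)
    (div_nonneg (by linarith) hs0.le) (by rw [div_le_one hs0]; linarith)
    (by field_simp; rw [hs]; nlinarith)
  have e1 : 1 + (‖a‖ - ‖b‖) / 2 / s = ‖a‖ / s := by field_simp; linarith
  have e2 : 1 - (‖a‖ - ‖b‖) / 2 / s = ‖b‖ / s := by field_simp; linarith
  have e3 : 2 * (‖a - b‖ / 2 / s) / N = ‖a - b‖ / N / s := by field_simp
  rw [e1, e2, e3, Real.div_rpow (by positivity) hs0.le, Real.div_rpow (by positivity) hs0.le,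
    Real.div_rpow (by positivity) hs0.le, Real.div_rpow (by positivity) hs0.le,
    Real.div_rpow (norm_nonneg (a - b)) hN.le] at key
  have hsp : 0 < s ^ p := Real.rpow_pos_of_pos hs0 p
  have := mul_le_mul_of_nonneg_right key hsp.le
  have hc : ∀ y : ℝ, y / s ^ p * s ^ p = y := fun y => div_mul_cancel₀ y hsp.ne'
  have e4 : ∀ C E K x y z w : ℝ, (x / s ^ p + C * (E * (y / s ^ p) - K *
      ((z / s ^ p + w / s ^ p) / 2))) * s ^ p = x + C * (E * y - K * ((z + w) / 2)) := by
    intro C E K x y z w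
    linear_combination hc x + C * E * hc y - C * K / 2 * (hc z + hc w)
  have e5 : ∀ z w : ℝ, (z / s ^ p + w / s ^ p) / 2 * s ^ p = (z + w) / 2 := by
    intro z w
    linear_combination (hc z + hc w) / 2
  rwa [e4, e5] at this

/-! ### The integral of `‖f‖ ^ p` and the space `A^p_α` -/

/-- The integral `∫ ‖f‖ ^ p dA_α`, that is, the `p`-th power of `‖f‖_{p,α}`. -/
def bInt (p α : ℝ) (f : ℂ → ℂ) : ℝ := ∫ z in unitDisc, ‖f z‖ ^ p * wt α z

lemma measurableSet_unitDisc : MeasurableSet unitDisc := measurableSet_ball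

lemma wt_nonneg {α : ℝ} (hα : -1 < α) {z : ℂ} (hz : z ∈ unitDisc) : 0 ≤ wt α z := by
  have h : ‖z‖ < 1 := by simpa [unitDisc] using hz
  have h2 : 0 ≤ 1 - ‖z‖ ^ 2 := by nlinarith [norm_nonneg z]
  have h3 : 0 ≤ α + 1 := by linarith
  unfold wt
  positivity

lemma bInt_nonneg {p α : ℝ} (hα : -1 < α) (f : ℂ → ℂ) : 0 ≤ bInt p α f :=
  setIntegral_nonneg measurableSet_unitDisc
    (fun _ hz => mul_nonneg (Real.rpow_nonneg (norm_nonneg _) _) (wt_nonneg hα hz))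

lemma bNorm_nonneg {p α : ℝ} (hα : -1 < α) (f : ℂ → ℂ) : 0 ≤ bNorm p α f :=
  Real.rpow_nonneg (bInt_nonneg hα f) _

lemma bNorm_rpow {p α : ℝ} (hp : 1 < p) (hα : -1 < α) (f : ℂ → ℂ) :
    bNorm p α f ^ p = bInt p α f := by
  change (bInt p α f ^ (1 / p)) ^ p = _
  rw [← Real.rpow_mul (bInt_nonneg hα f), one_div_mul_cancel (by linarith), Real.rpow_one]

lemma bNorm_smul {p α : ℝ} (hp : 1 < p) (hα : -1 < α) (c : ℂ) (f : ℂ → ℂ) :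
    bNorm p α (c • f) = ‖c‖ * bNorm p α f := by
  have : bInt p α (c • f) = ‖c‖ ^ p * bInt p α f := by
    unfold bInt
    rw [← integral_const_mul]
    congr 1
    ext z
    rw [Pi.smul_apply, norm_smul, Real.mul_rpow (norm_nonneg _) (norm_nonneg _), mul_assoc]
  change bInt p α (c • f) ^ (1 / p) = ‖c‖ * bInt p α f ^ (1 / p)
  rw [this, Real.mul_rpow (by positivity) (bInt_nonneg hα f), ← Real.rpow_mul (norm_nonneg _),
    mul_one_div_cancel (by linarith), Real.rpow_one]

lemma MemAp.smul {p α : ℝ} {f : ℂ → ℂ} (hf : MemAp p α f) (c : ℂ) : MemAp p α (c • f) := by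
  refine ⟨hf.1.const_smul c, ?_⟩
  have := hf.2.const_mul (‖c‖ ^ p)
  refine this.congr (Filter.Eventually.of_forall fun z => ?_)
  simp only [Pi.smul_apply]
  rw [norm_smul, Real.mul_rpow (norm_nonneg _) (norm_nonneg _), mul_assoc]

lemma MemAp.add {p α : ℝ} (hp : 1 < p) (hα : -1 < α) {f g : ℂ → ℂ} (hf : MemAp p α f)
    (hg : MemAp p α g) : MemAp p α (f + g) := by
  refine ⟨hf.1.add hg.1, ?_⟩
  have hwt : Measurable (wt α) := by unfold wt; fun_prop
  have hmeas : AEStronglyMeasurable (fun z => ‖(f + g) z‖ ^ p * wt α z)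
      (volume.restrict unitDisc) := by
    have hc : ContinuousOn (fun z => ‖(f + g) z‖ ^ p) unitDisc :=
      (hf.1.add hg.1).continuousOn.norm.rpow_const (fun _ _ => Or.inr (by linarith))
    exact (hc.aestronglyMeasurable measurableSet_unitDisc).mul hwt.aestronglyMeasurable
  refine Integrable.mono' ((hf.2.add hg.2).const_mul (2 ^ (p - 1))) hmeas ?_
  filter_upwards [ae_restrict_mem measurableSet_unitDisc] with z hz
  have hw := wt_nonneg hα hz
  rw [Real.norm_of_nonneg (mul_nonneg (Real.rpow_nonneg (norm_nonneg _) _) hw)]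
  have h1 : ‖(f + g) z‖ ^ p ≤ (‖f z‖ + ‖g z‖) ^ p :=
    Real.rpow_le_rpow (norm_nonneg _) (norm_add_le _ _) (by linarith)
  have h2 : (‖f z‖ + ‖g z‖) ^ p ≤ 2 ^ (p - 1) * (‖f z‖ ^ p + ‖g z‖ ^ p) := by
    exact_mod_cast NNReal.rpow_add_le_mul_rpow_add_rpow ‖f z‖₊ ‖g z‖₊ hp.le
  simp only [Pi.add_apply] at h1 ⊢
  calc _ ≤ 2 ^ (p - 1) * (‖f z‖ ^ p + ‖g z‖ ^ p) * wt α z :=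
        mul_le_mul_of_nonneg_right (h1.trans h2) hw
    _ = _ := by ring

lemma MemAp.sub {p α : ℝ} (hp : 1 < p) (hα : -1 < α) {f g : ℂ → ℂ} (hf : MemAp p α f)
    (hg : MemAp p α g) : MemAp p α (f - g) := by
  have := hf.add hp hα (hg.smul (-1))
  rwa [neg_one_smul, ← sub_eq_add_neg] at this

/-- A pointwise uniform convexity inequality integrates to one for `bInt`. -/
lemma bInt_uniform_convexity {p α : ℝ} (hp : 1 < p) (hα : -1 < α) {A B : ℝ}
    (hAB : ∀ a b : ℂ, ‖(1 / 2 : ℂ) * (a + b)‖ ^ p + A * ‖a - b‖ ^ p ≤ B * (‖a‖ ^ p + ‖b‖ ^ p))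
    {f g : ℂ → ℂ} (hf : MemAp p α f) (hg : MemAp p α g) :
    bInt p α ((1 / 2 : ℂ) • (f + g)) + A * bInt p α (f - g) ≤ B * (bInt p α f + bInt p α g) := by
  have hM := ((hf.add hp hα hg).smul (1 / 2)).2
  have hD := ((hf.sub hp hα hg).2).const_mul A
  have hR := (hf.2.add hg.2).const_mul B
  unfold bInt
  rw [← integral_add hf.2 hg.2, ← integral_const_mul, ← integral_const_mul,
    ← integral_add hM hD]
  refine setIntegral_mono_on (hM.add hD) hR measurableSet_unitDisc fun z hz => ?_
  have := mul_le_mul_of_nonneg_right (hAB (f z) (g z)) (wt_nonneg hα hz)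
  simp only [Pi.smul_apply, Pi.add_apply, Pi.sub_apply, smul_eq_mul]
  linarith

/-! ### Functionals and extremal functions -/

lemma re_le_dualNorm {p α : ℝ} {φ : (ℂ → ℂ) →ₗ[ℂ] ℂ}
    (hb : BddAbove {r | ∃ f, MemAp p α f ∧ bNorm p α f ≤ 1 ∧ r = (φ f).re})
    {f : ℂ → ℂ} (hf : MemAp p α f) (hn : bNorm p α f ≤ 1) : (φ f).re ≤ dualNorm p α φ :=
  le_csSup hb ⟨f, hf, hn, rfl⟩

/-- The supremum of an unbounded set of reals is `0` by convention, so a functional of norm `1`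
is bounded on the unit ball. -/
lemma bddAbove_of_dualNorm_eq_one {p α : ℝ} {φ : (ℂ → ℂ) →ₗ[ℂ] ℂ} (h : dualNorm p α φ = 1) :
    BddAbove {r | ∃ f, MemAp p α f ∧ bNorm p α f ≤ 1 ∧ r = (φ f).re} := by
  by_contra hb
  rw [dualNorm, Real.sSup_of_not_bddAbove hb] at h
  exact zero_ne_one h

lemma re_le_bNorm {p α : ℝ} (hp : 1 < p) (hα : -1 < α) {φ : (ℂ → ℂ) →ₗ[ℂ] ℂ}
    (h : dualNorm p α φ = 1) {f : ℂ → ℂ} (hf : MemAp p α f) : (φ f).re ≤ bNorm p α f := by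
  refine le_of_forall_gt_imp_ge_of_dense fun r hr => ?_
  have hr0 : 0 < r := (bNorm_nonneg hα f).trans_lt hr
  have hn : bNorm p α ((r⁻¹ : ℂ) • f) ≤ 1 := by
    rw [bNorm_smul hp hα, norm_inv, norm_real, Real.norm_of_nonneg hr0.le, inv_mul_le_iff₀ hr0]
    linarith
  have := re_le_dualNorm (bddAbove_of_dualNorm_eq_one h) (hf.smul _) hn
  rw [h, map_smul, smul_eq_mul, ← ofReal_inv, re_ofReal_mul, inv_mul_le_iff₀ hr0] at this
  linarith

/-- The midpoint of two extremal functions has nearly unit norm when the functionals are close.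
This uses that `φ₂` nearly attains its norm at `F₁`. -/
lemma one_sub_le_bInt_midpoint {p α : ℝ} (hp : 1 < p) (hα : -1 < α)
    {φ₁ φ₂ : (ℂ → ℂ) →ₗ[ℂ] ℂ} (h1 : dualNorm p α φ₁ = 1) (h2 : dualNorm p α φ₂ = 1)
    {δ : ℝ} (hd : dualNorm p α (φ₁ - φ₂) < δ) {F₁ F₂ : ℂ → ℂ}
    (hF₁ : IsExtremalFn p α φ₁ F₁) (hF₂ : IsExtremalFn p α φ₂ F₂) :
    1 - p * δ / 2 ≤ bInt p α ((1 / 2 : ℂ) • (F₁ + F₂)) := by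
  -- Without this bound, `dualNorm p α (φ₁ - φ₂)` could be the junk value `0` of `sSup`.
  have hb : BddAbove {r | ∃ f, MemAp p α f ∧ bNorm p α f ≤ 1 ∧ r = ((φ₁ - φ₂) f).re} := by
    refine ⟨2, ?_⟩
    rintro r ⟨f, hf, hn, rfl⟩
    have e1 := re_le_bNorm hp hα h1 hf
    have e2 := re_le_bNorm hp hα h2 (hf.smul (-1))
    rw [bNorm_smul hp hα, map_smul] at e2
    simp at e2
    rw [LinearMap.sub_apply, sub_re]
    linarith
  have hdF := (re_le_dualNorm hb hF₁.1 hF₁.2.1.le).trans_lt hd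
  rw [LinearMap.sub_apply, sub_re, hF₁.2.2, h1] at hdF
  have hM := re_le_bNorm hp hα h2 ((hF₁.1.add hp hα hF₂.1).smul (1 / 2))
  have e : (φ₂ ((1 / 2 : ℂ) • (F₁ + F₂))).re = ((φ₂ F₁).re + (φ₂ F₂).re) / 2 := by
    rw [map_smul, map_add, smul_eq_mul, show (1 / 2 : ℂ) = ((1 / 2 : ℝ) : ℂ) by norm_num,
      re_ofReal_mul, add_re]
    ring
  rw [e, hF₂.2.2, h2] at hM
  rcases le_total δ 2 with hδ2 | hδ2
  · have hB := one_add_mul_self_le_rpow_one_add (s := -δ / 2) (by linarith) hp.le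
    rw [← bNorm_rpow hp hα]
    calc 1 - p * δ / 2 = 1 + p * (-δ / 2) := by ring
      _ ≤ (1 + -δ / 2) ^ p := hB
      _ ≤ _ := Real.rpow_le_rpow (by linarith) (by linarith) (by linarith)
  -- For `δ ≥ 2` the lower bound is at most `1 - p < 0`.
  · exact le_trans (by nlinarith) (bInt_nonneg hα _)

/-- If `φ₁, φ₂` are unit-norm bounded linear functionals on `A^p_α` with
`‖φ₁ - φ₂‖ < δ`, then the corresponding extremal functions satisfy
`‖F₁ - F₂‖_{p,α} ≤ 2^{1-1/p} p^{1/p} δ^{1/p}` for `p > 2` and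
`‖F₁ - F₂‖_{p,α} ≤ 2 (p-1)^{-1/2} δ^{1/2}` for `p < 2`. -/
theorem extremal_functions_close_of_functionals_close
    (p α : ℝ) (hp1 : 1 < p) (hp2 : p ≠ 2) (hα : -1 < α)
    (φ₁ φ₂ : (ℂ → ℂ) →ₗ[ℂ] ℂ)
    (h1 : dualNorm p α φ₁ = 1) (h2 : dualNorm p α φ₂ = 1)
    (δ : ℝ) (hδ : 0 < δ) (hd : dualNorm p α (φ₁ - φ₂) < δ)
    (F₁ F₂ : ℂ → ℂ)
    (hF₁ : IsExtremalFn p α φ₁ F₁) (hF₂ : IsExtremalFn p α φ₂ F₂) :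
    (2 < p → bNorm p α (fun z => F₁ z - F₂ z)
        ≤ 2 ^ (1 - 1/p) * p ^ (1/p) * δ ^ (1/p)) ∧
    (p < 2 → bNorm p α (fun z => F₁ z - F₂ z)
        ≤ 2 * (p - 1) ^ (-(1:ℝ)/2) * δ ^ ((1:ℝ)/2)) := by
  have hp0 : 0 < p := by linarith
  have hI1 : bInt p α F₁ = 1 := by rw [← bNorm_rpow hp1 hα, hF₁.2.1, Real.one_rpow]
  have hI2 : bInt p α F₂ = 1 := by rw [← bNorm_rpow hp1 hα, hF₂.2.1, Real.one_rpow]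
  have hM := one_sub_le_bInt_midpoint hp1 hα h1 h2 hd hF₁ hF₂
  have hN0 : 0 ≤ bNorm p α (F₁ - F₂) := bNorm_nonneg hα _
  have hNp := bNorm_rpow hp1 hα (F₁ - F₂)
  change (2 < p → bNorm p α (F₁ - F₂) ≤ _) ∧ (p < 2 → bNorm p α (F₁ - F₂) ≤ _)
  set N := bNorm p α (F₁ - F₂)
  refine ⟨fun h => ?_, fun h => ?_⟩
  · have key := bInt_uniform_convexity hp1 hα (A := 1 / 2 ^ p) (B := 1 / 2)
      (fun a b => by
        have := clarkson_pointwise h a b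
        rw [one_div_mul_eq_div ((2 : ℝ) ^ p)]
        linarith) hF₁.1 hF₂.1
    rw [hI1, hI2, ← hNp, one_div_mul_eq_div] at key
    have h2p : (0 : ℝ) < 2 ^ p := by positivity
    have hle : N ^ p ≤ 2 ^ p * (p * δ / 2) := by
      rw [← div_le_iff₀' h2p]
      linarith
    -- `2 (p δ / 2) ^ (1 / p)` is the constant in the statement.
    have e : 2 ^ (1 - 1 / p) * p ^ (1 / p) * δ ^ (1 / p) = (2 ^ p * (p * δ / 2)) ^ (1 / p) := by
      rw [show 2 ^ p * (p * δ / 2) = 2 ^ (p - 1) * p * δ by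
          rw [Real.rpow_sub_one (by norm_num)]; ring,
        Real.mul_rpow (by positivity) hδ.le, Real.mul_rpow (by positivity) hp0.le,
        ← Real.rpow_mul (by norm_num)]
      congr 3
      field_simp
    rw [e, one_div]
    exact (Real.le_rpow_inv_iff_of_pos hN0 (by positivity) hp0).2 hle
  · rcases hN0.eq_or_lt with hN | hN
    · rw [← hN]
      have : 0 ≤ p - 1 := by linarith
      positivity
    have key := bInt_uniform_convexity hp1 hα
      (A := p * (p - 1) / 8 * N ^ 2 * (2 / p) / N ^ p)
      (B := 1 / 2 + p * (p - 1) / 8 * N ^ 2 * (2 / p - 1) / 2)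
      (fun a b => by
        have := convexity_pointwise hp1 h hN a b
        ring_nf at this ⊢
        linarith) hF₁.1 hF₂.1
    -- The unknown `N` enters both `A` and `B`; with `∫ ‖F₁ - F₂‖ ^ p = N ^ p` the powers cancel
    -- and what remains is `‖(F₁ + F₂) / 2‖ ^ p + p (p - 1) / 8 * N ^ 2 ≤ 1`.
    have hNp0 : N ^ p ≠ 0 := (Real.rpow_pos_of_pos hN p).ne'
    rw [hI1, hI2, ← hNp, div_mul_cancel₀ _ hNp0] at key
    have hq : 0 < p - 1 := by linarith
    have hsq : N ^ 2 ≤ 4 * δ / (p - 1) := by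
      rw [le_div_iff₀ hq]
      have : p * (N ^ 2 * (p - 1)) ≤ p * (4 * δ) := by linarith
      exact le_of_mul_le_mul_left this hp0
    have e : (2 * (p - 1) ^ (-(1:ℝ)/2) * δ ^ ((1:ℝ)/2)) ^ 2 = 4 * δ / (p - 1) := by
      rw [mul_pow, mul_pow, ← Real.rpow_mul_natCast hq.le, ← Real.rpow_mul_natCast hδ.le]
      norm_num [Real.rpow_neg_one]
      ring
    rw [← e] at hsq
    exact (pow_le_pow_iff_left₀ hN0 (by positivity) two_ne_zero).1 hsq
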